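/- Let R be a commutative ring, A a commutative R-algebra, α ∈ A, and ∂ an α-derivation of A over R. Then for every x ∈ A and every positive integer n: ∂(x^n) = ∑_{m=1}^{n} C(n,m)·x^{n−m}·α^{m−1}·∂(x)^m. -/

import Mathlib

/-!
Adjoin to `A` an element `ω` with `ω ^ 2 = α * ω`. The twisted Leibniz rule for `∂` says exactly
that `x ↦ x + ∂ x * ω` is multiplicative, so `∂ (x ^ n)` is the coefficient of `ω` in
`(x + ∂ x * ω) ^ n`, which the binomial theorem and `ω ^ m = α ^ (m - 1) * ω` for `m ≥ 1` compute.
-/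

/-- An `α`-derivation of a commutative `R`-algebra `A` over `R`: an `R`-linear map
`∂ : A → A` with `∂(1) = 0` satisfying the twisted Leibniz rule
`∂(xy) = ∂(x)·y + x·∂(y) + α·∂(x)·∂(y)`. -/
structure AlphaDerivation (R A : Type*) [CommRing R] [CommRing A] [Algebra R A]
    (α : A) where
  toFun : A → A
  map_add' : ∀ x y : A, toFun (x + y) = toFun x + toFun y
  map_smul' : ∀ (r : R) (x : A), toFun (r • x) = r • toFun x
  map_one' : toFun 1 = 0
  leibniz' : ∀ x y : A, toFun (x * y) =
    toFun x * y + x * toFun y + α * (toFun x * toFun y)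

theorem mulHom_map_pow {M N : Type*} [Monoid M] [Monoid N] (f : M →ₙ* N) (x : M) {n : ℕ}
    (hn : 0 < n) : f (x ^ n) = f x ^ n := by
  induction n, hn using Nat.le_induction with
  | base => rw [pow_one, pow_one]
  | succ n _ ih => rw [pow_succ, map_mul, ih, pow_succ]

section TwistedLeibniz

open Finset QuadraticAlgebra

variable {A : Type*} [CommSemiring A] {α : A}

theorem omega_pow_succ (n : ℕ) : (ω : QuadraticAlgebra A 0 α) ^ (n + 1) = α ^ n • ω := by
  induction n with
  | zero => simp only [zero_add, pow_one, pow_zero, one_smul]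
  | succ n ih =>
    rw [pow_succ, ih, smul_mul_assoc, omega_mul_omega_eq_add, zero_smul, zero_add, smul_smul,
      ← pow_succ]

theorem mk_pow_eq_sum {a b : A} (x y : A) (n : ℕ) :
    (⟨x, y⟩ : QuadraticAlgebra A a b) ^ n =
      ∑ m ∈ range (n + 1), (n.choose m * x ^ (n - m) * y ^ m) • ω ^ m := by
  rw [mk_eq_add_smul_omega, add_comm, add_pow]
  refine sum_congr rfl fun m _ => ?_
  rw [Algebra.smul_def, Algebra.smul_def]
  simp only [map_mul, map_pow, map_natCast]
  ring

theorem im_mk_pow (x y : A) (n : ℕ) :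
    ((⟨x, y⟩ : QuadraticAlgebra A 0 α) ^ n).im =
      ∑ m ∈ Icc 1 n, n.choose m * x ^ (n - m) * α ^ (m - 1) * y ^ m := by
  rw [mk_pow_eq_sum, ← imₗ_apply, map_sum, range_eq_Ico, sum_eq_sum_Ico_succ_bot n.succ_pos]
  have constant_term : imₗ 0 α ((n.choose 0 * x ^ (n - 0) * y ^ 0) • ω ^ 0) = 0 := by
    rw [map_smul, imₗ_apply, pow_zero ω, im_one, smul_zero]
  rw [constant_term, zero_add, zero_add, Nat.succ_eq_add_one, Ico_add_one_right_eq_Icc]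
  refine sum_congr rfl fun m hm => ?_
  obtain ⟨k, rfl⟩ := Nat.exists_eq_add_of_le' (mem_Icc.mp hm).1
  rw [omega_pow_succ, map_smul, map_smul, imₗ_apply, omega_im, Nat.add_sub_cancel, smul_eq_mul,
    smul_eq_mul]
  ring

/-- The map `x ↦ x + d x * ω` into `A[ω]`, `ω ^ 2 = α * ω`, attached to a map `d` satisfying the
`α`-twisted Leibniz rule. It is only a homomorphism of multiplicative semigroups: it preserves `1`
exactly when `d 1 = 0`. -/
def twistedLeibnizMulHom (d : A → A)
    (leibniz : ∀ x y, d (x * y) = d x * y + x * d y + α * (d x * d y)) :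
    A →ₙ* QuadraticAlgebra A 0 α where
  toFun x := ⟨x, d x⟩
  map_mul' x y := by
    rw [mk_mul_mk, leibniz]
    ext <;> ring

theorem alphaDerivation_pow_general {d : A → A}
    (leibniz : ∀ x y, d (x * y) = d x * y + x * d y + α * (d x * d y)) (x : A) {n : ℕ}
    (hn : 0 < n) :
    d (x ^ n) = ∑ m ∈ Icc 1 n, n.choose m * x ^ (n - m) * α ^ (m - 1) * d x ^ m := by
  calc
    d (x ^ n) = (twistedLeibnizMulHom d leibniz (x ^ n)).im := rfl
    _ = (twistedLeibnizMulHom d leibniz x ^ n).im := by rw [mulHom_map_pow _ x hn]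
    _ = _ := im_mk_pow x (d x) n

end TwistedLeibniz

/-- For an `α`-derivation `∂` of `A` over `R` and a positive integer `n`:
`∂(x^n) = ∑_{m=1}^n C(n,m)·x^{n−m}·α^{m−1}·∂(x)^m`. -/
theorem alphaDerivation_pow (R A : Type*) [CommRing R] [CommRing A] [Algebra R A]
    (α : A) (D : AlphaDerivation R A α) (x : A) (n : ℕ) (hn : 0 < n) :
    D.toFun (x ^ n) = ∑ m ∈ Finset.Icc 1 n,
      (n.choose m : A) * x ^ (n - m) * α ^ (m - 1) * (D.toFun x) ^ m :=
  alphaDerivation_pow_general D.leibniz' x hn
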